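/- arXiv:1301.1315 — 3 statements merged into one kernel-verified Lean document; each statement's English description precedes it below -/
import Mathlib

section
/- Let (x₁,…,x_n) ∈ ℝⁿ with −1 < x₁ ≤ x₂ ≤ ⋯ ≤ x_n and Σ_{i=1}^n x_i = 0. Then ∏_{i=1}^n (1 + x_i) ≤ 1 − (n/(2(n−1)))·x₁² ≤ 1 − (Σ_{i=1}^n x_i²)/(2(n−1)²). -/
open Real

/-!
Put `m = n - 1`, `a = -x₁ ≥ 0` and `t = a / m`. The numbers `1 + x₂, …, 1 + x_n` are positive with
mean `1 + t`, so AM-GM bounds the product by `(1 - m t) (1 + t) ^ m`. An induction on `m`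
(`one_sub_mul_pow_le`) bounds this by `1 - m (m + 1) / 2 * t ^ 2`, which is the first inequality.

For the second one, the numbers `yᵢ = xᵢ + a` are nonnegative with sum `n a`, so
`∑ xᵢ² + n a² = ∑ yᵢ² ≤ (∑ yᵢ)² = n² a²`, that is, `∑ xᵢ² ≤ n (n - 1) a²`.
-/

/-- The induction works because
`(1 - (m + 1) t) (1 + t) ^ (m + 1) = (1 - m t) (1 + t) ^ m - (m + 1) t ^ 2 (1 + t) ^ m`. -/
lemma one_sub_mul_pow_le (t : ℝ) (ht : 0 ≤ t) (m : ℕ) :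
    (1 - m * t) * (1 + t) ^ m ≤ 1 - m * (m + 1) / 2 * t ^ 2 := by
  induction m with
  | zero => simp
  | succ k ih =>
    have h1 : (1 : ℝ) ≤ (1 + t) ^ k := one_le_pow₀ (by linarith)
    have h2 : ((k : ℝ) + 1) * t ^ 2 * 1 ≤ (k + 1) * t ^ 2 * (1 + t) ^ k :=
      mul_le_mul_of_nonneg_left h1 (by positivity)
    push_cast
    rw [pow_succ]
    linarith

/-- AM-GM in the form used here: nonnegative reals with mean `c > 0` have product at most `c ^ m`. -/
lemma prod_le_pow_of_sum_eq {m : ℕ} (y : Fin m → ℝ) (c : ℝ) (hc : 0 < c) (hy : ∀ i, 0 ≤ y i)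
    (hs : ∑ i, y i = m * c) : ∏ i, y i ≤ c ^ m := by
  -- Each factor lies below `c * exp ((y i - c) / c)`, and the exponents add up to zero.
  have h : ∀ i, y i ≤ c * exp ((y i - c) / c) := fun i => by
    have h1 := mul_le_mul_of_nonneg_left (add_one_le_exp ((y i - c) / c)) hc.le
    have h2 : c * ((y i - c) / c + 1) = y i := by field_simp; ring
    linarith
  calc ∏ i, y i ≤ ∏ i, c * exp ((y i - c) / c) :=
        Finset.prod_le_prod (fun i _ => hy i) (fun i _ => h i)
    _ = c ^ m := by
        rw [Finset.prod_mul_distrib, ← exp_sum, ← Finset.sum_div, Finset.sum_sub_distrib, hs]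
        simp

/-- **Lemma A.2**: if `-1 < x₁ ≤ x₂ ≤ ⋯ ≤ x_n` and `∑ᵢ xᵢ = 0`, then
`∏ᵢ (1+xᵢ) ≤ 1 - (n/(2(n-1))) x₁² ≤ 1 - (∑ᵢ xᵢ²)/(2(n-1)²)`. -/
theorem prod_one_add_le (n : ℕ) (hn : 2 ≤ n) (x : Fin n → ℝ)
    (hmono : Monotone x)
    (hlb : -1 < x ⟨0, by omega⟩)
    (hsum : ∑ i, x i = 0) :
    ∏ i, (1 + x i) ≤ 1 - ((n:ℝ)/(2*((n:ℝ)-1))) * (x ⟨0, by omega⟩)^2 ∧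
    1 - ((n:ℝ)/(2*((n:ℝ)-1))) * (x ⟨0, by omega⟩)^2
      ≤ 1 - (∑ i, (x i)^2) / (2*((n:ℝ)-1)^2) := by
  obtain ⟨m, rfl⟩ : ∃ m, n = m + 1 := ⟨n - 1, by omega⟩
  change -1 < x 0 at hlb
  change _ ≤ 1 - _ * (x 0) ^ 2 ∧ 1 - _ * (x 0) ^ 2 ≤ _
  have hm : (0 : ℝ) < m := by exact_mod_cast (by omega : 0 < m)
  have hmin : ∀ i, x 0 ≤ x i := fun i => hmono (Fin.zero_le i)
  have hx0 : x 0 ≤ 0 := by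
    have h := Finset.sum_le_sum (fun i (_ : i ∈ Finset.univ) => hmin i)
    rw [hsum] at h
    simp only [Finset.sum_const, Finset.card_univ, Fintype.card_fin, nsmul_eq_mul] at h
    push_cast at h
    nlinarith
  push_cast
  rw [add_sub_cancel_right]
  constructor
  · obtain ⟨t, ht⟩ : ∃ t, t = -x 0 / m := ⟨_, rfl⟩
    have ht0 : 0 ≤ t := by rw [ht]; exact div_nonneg (by linarith) hm.le
    have hxt : x 0 = -(m * t) := by rw [ht]; field_simp
    have hs : ∑ i : Fin m, (1 + x i.succ) = m * (1 + t) := by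
      rw [Fin.sum_univ_succ] at hsum
      rw [Finset.sum_add_distrib]
      simp only [Finset.sum_const, Finset.card_univ, Fintype.card_fin, nsmul_eq_mul]
      linarith
    have hp := prod_le_pow_of_sum_eq (fun i : Fin m => 1 + x i.succ) (1 + t) (by linarith)
      (fun i => by linarith [hmin i.succ]) hs
    rw [Fin.prod_univ_succ]
    calc (1 + x 0) * ∏ i : Fin m, (1 + x i.succ) ≤ (1 + x 0) * (1 + t) ^ m :=
          mul_le_mul_of_nonneg_left hp (by linarith)
      _ = (1 - m * t) * (1 + t) ^ m := by rw [hxt]; ring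
      _ ≤ 1 - m * (m + 1) / 2 * t ^ 2 := one_sub_mul_pow_le t ht0 m
      _ = 1 - ((m : ℝ) + 1) / (2 * m) * (x 0) ^ 2 := by rw [hxt]; field_simp
  · have hq : ∑ i, (x i - x 0) ^ 2 ≤ (∑ i, (x i - x 0)) ^ 2 :=
      Finset.sum_sq_le_sq_sum_of_nonneg (fun i _ => sub_nonneg.2 (hmin i))
    have hl : ∑ i, (x i - x 0) ^ 2 = ∑ i, (x i) ^ 2 + (m + 1) * (x 0) ^ 2 := by
      simp only [sub_sq, Finset.sum_add_distrib, Finset.sum_sub_distrib, ← Finset.sum_mul,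
        ← Finset.mul_sum, hsum]
      simp
    have hr : ∑ i, (x i - x 0) = -((m + 1) * x 0) := by
      rw [Finset.sum_sub_distrib, hsum]
      simp
    rw [hl, hr] at hq
    have hb : ∑ i, (x i) ^ 2 ≤ m * (m + 1) * (x 0) ^ 2 := by linarith
    have : (∑ i, (x i) ^ 2) / (2 * (m : ℝ) ^ 2) ≤ ((m : ℝ) + 1) / (2 * m) * (x 0) ^ 2 := by
      rw [div_le_iff₀ (by positivity)]
      refine hb.trans (le_of_eq ?_)
      field_simp
    linarith
end

section
/- Let A be a real symmetric non-negative n×n matrix and η' ∈ (0,1). If det(A)/((1/n)tr(A))ⁿ ≥ 1 − η', then ‖A − (1/n)tr(A)·Id‖² ≤ 2(n−1)²·η'·((1/n)tr(A))², where ‖·‖ denotes the Frobenius (Hilbert–Schmidt) norm. -/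
/-!
The claim only involves the eigenvalues of `A`. After dividing by their mean `m = tr A / n` they
become positive numbers `x i` with sum `n` and product `p ≥ 1 - η'`, and the claim reads
`∑ (x i - 1)² ≤ 2 (n-1)² η'`.

The stronger bound `∑ (x i)² ≤ n² - n (n-1) p` holds, which is Maclaurin's inequality between
the second elementary symmetric function and the product, combined with `p ≤ 1`
(`sum_sq_le_of_sum_eq_card`). Its proof applies `t ≥ 1 + log t` to `t = x i * x j / p` for every
pair `i ≠ j` and sums up. It gives `∑ (x i - 1)² ≤ n (n-1) (1 - p) ≤ n (n-1) η'`, and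
`n ≤ 2 (n-1)` as soon as `n ≥ 2`; for `n ≤ 1` the matrix `A - m Id` vanishes.
-/

open Real

noncomputable section

/-- Positive reals `x i` with mean `1` satisfy `∑_{i ≠ j} x i * x j ≥ n (n-1) ∏ x i`, stated here
in terms of the sum of squares. -/
lemma sum_sq_le_of_sum_eq_card (n : ℕ) (hn : 2 ≤ n) (x : Fin n → ℝ) (hx : ∀ i, 0 < x i)
    (hsum : ∑ i, x i = n) :
    ∑ i, x i ^ 2 ≤ (n : ℝ) ^ 2 - n * (n - 1) * ∏ i, x i := by
  have hp : 0 < ∏ i, x i := Finset.prod_pos fun i _ => hx i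
  have hlog : log (∏ i, x i) = ∑ i, log (x i) := Real.log_prod fun i _ => (hx i).ne'
  have hL : ∑ i, log (x i) ≤ 0 := by
    calc ∑ i, log (x i) ≤ ∑ i, (x i - 1) :=
          Finset.sum_le_sum fun i _ => Real.log_le_sub_one_of_pos (hx i)
      _ = 0 := by simp [Finset.sum_sub_distrib, hsum]
  set p := ∏ i, x i
  set L := ∑ i, log (x i)
  -- The defect of the tangent inequality `t ≥ 1 + log t` at `t = x i * x j / p`, scaled by `p`.
  let f : Fin n → Fin n → ℝ := fun i j => x i * x j - p * (1 + log (x i) + log (x j) - L)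
  have hf : ∀ i j, 0 ≤ f i j := by
    intro i j
    have h1 := Real.log_le_sub_one_of_pos (div_pos (mul_pos (hx i) (hx j)) hp)
    rw [Real.log_div (mul_pos (hx i) (hx j)).ne' hp.ne', Real.log_mul (hx i).ne' (hx j).ne',
      hlog, le_sub_iff_add_le, le_div_iff₀ hp] at h1
    simp only [f]
    linarith
  have hdiag : ∑ i, f i i ≤ ∑ i, ∑ j, f i j :=
    Finset.sum_le_sum fun i _ =>
      Finset.single_le_sum (f := f i) (fun j _ => hf i j) (Finset.mem_univ i)
  have e1 : ∑ i, f i i = ∑ i, x i ^ 2 - p * (n + 2 * L - n * L) := by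
    simp only [f, Finset.sum_sub_distrib, ← Finset.mul_sum, Finset.sum_add_distrib,
      Finset.sum_const, Finset.card_univ, Fintype.card_fin, nsmul_eq_mul, ← pow_two]
    ring
  have e2 : ∑ i, ∑ j, f i j = (n : ℝ) ^ 2 - p * (n ^ 2 + 2 * n * L - n ^ 2 * L) := by
    simp only [f, Finset.sum_sub_distrib, ← Finset.mul_sum, Finset.sum_add_distrib,
      Finset.sum_const, Finset.card_univ, Fintype.card_fin, nsmul_eq_mul, ← Finset.sum_mul, hsum]
    ring
  rw [e1, e2] at hdiag
  have hn' : (2 : ℝ) ≤ n := by exact_mod_cast hn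
  have h3 : 0 ≤ p * ((n - 1) * (n - 2)) * (-L) :=
    mul_nonneg (mul_nonneg hp.le (mul_nonneg (by linarith) (by linarith))) (by linarith)
  nlinarith

lemma sum_sq_entries_eq_sum_sq_eigenvalues {n : ℕ} {A : Matrix (Fin n) (Fin n) ℝ}
    (hA : A.IsHermitian) : ∑ i, ∑ j, A i j ^ 2 = ∑ i, hA.eigenvalues i ^ 2 := by
  have h1 : ∑ i, ∑ j, A i j ^ 2 = (A * A).trace := by
    simp only [Matrix.trace, Matrix.diag, Matrix.mul_apply, pow_two]
    refine Finset.sum_congr rfl fun i _ => Finset.sum_congr rfl fun j _ => ?_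
    have := hA.apply i j
    simp only [star_trivial] at this
    rw [this]
  rw [h1]
  conv_lhs => rw [hA.spectral_theorem]
  rw [← map_mul, Unitary.conjStarAlgAut_apply, Matrix.trace_mul_comm, ← mul_assoc]
  simp [Matrix.diagonal_mul_diagonal, Matrix.trace_diagonal, pow_two]

/-- **Lemma A.3** (stability of `A ↦ det(A)/((1/n) tr A)ⁿ` near its maximum): if a real
symmetric non-negative (positive semidefinite) matrix `A` satisfies
`det(A)/((1/n) tr A)ⁿ ≥ 1 - η'` with `η' ∈ (0,1)`, then the squared Frobenius norm of
`A - (1/n) tr(A)·Id` is at most `2(n-1)² η' ((1/n) tr A)²`. -/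
theorem frobenius_dist_to_trace_id (n : ℕ) (η' : ℝ) (hη0 : 0 < η') (hη1 : η' < 1)
    (A : Matrix (Fin n) (Fin n) ℝ) (hsymm : A.IsSymm) (hpsd : A.PosSemidef)
    (h : 1 - η' ≤ A.det / ((1/(n:ℝ)) * A.trace)^n) :
    ∑ i, ∑ j, (A i j - (1/(n:ℝ)) * A.trace * (1 : Matrix (Fin n) (Fin n) ℝ) i j)^2
      ≤ 2*((n:ℝ)-1)^2 * η' * ((1/(n:ℝ)) * A.trace)^2 := by
  rcases Nat.lt_or_ge n 2 with hn | hn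
  · interval_cases n
    · simp
    · simp [Matrix.trace]
  have hn' : (2 : ℝ) ≤ n := by exact_mod_cast hn
  have hn0 : (n : ℝ) ≠ 0 := by linarith
  have hA := hpsd.isHermitian
  have hnn : ∀ i, 0 ≤ hA.eigenvalues i := hpsd.eigenvalues_nonneg
  have htr : A.trace = ∑ i, hA.eigenvalues i := by simpa using hA.trace_eq_sum_eigenvalues
  have hdet : A.det = ∏ i, hA.eigenvalues i := by simpa using hA.det_eq_prod_eigenvalues
  have hfrob := sum_sq_entries_eq_sum_sq_eigenvalues hA
  set m : ℝ := (1/(n:ℝ)) * A.trace with hm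
  have htm : A.trace = n * m := by rw [hm]; field_simp
  have hm0 : 0 ≤ m := by
    rw [hm, htr]
    exact mul_nonneg (by positivity) (Finset.sum_nonneg fun i _ => hnn i)
  -- If `m = 0`, the quotient in `h` would be `0 / 0 = 0`.
  have hmpos : 0 < m := by
    refine lt_of_le_of_ne hm0 fun h0 => ?_
    rw [← h0, zero_pow (by omega), div_zero] at h
    linarith
  have hpos : ∀ i, 0 < hA.eigenvalues i := by
    refine fun i => lt_of_le_of_ne (hnn i) fun h0 => ?_
    rw [hdet, Finset.prod_eq_zero (Finset.mem_univ i) h0.symm, zero_div] at h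
    linarith
  have key := sum_sq_le_of_sum_eq_card n hn (fun i => hA.eigenvalues i / m)
    (fun i => div_pos (hpos i) hmpos) (by
      rw [← Finset.sum_div, ← htr, htm, mul_div_assoc, div_self hmpos.ne', mul_one])
  simp only [div_pow, ← Finset.sum_div, Finset.prod_div_distrib, Finset.prod_const,
    Finset.card_univ, Fintype.card_fin, ← hdet, ← hfrob] at key
  rw [div_le_iff₀ (by positivity)] at key
  have hexp : ∑ i, ∑ j, (A i j - m * (1 : Matrix (Fin n) (Fin n) ℝ) i j)^2
      = ∑ i, ∑ j, A i j ^ 2 - n * m ^ 2 := by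
    have hentry : ∀ i j, (A i j - m * (1 : Matrix (Fin n) (Fin n) ℝ) i j)^2
        = A i j ^ 2 + if i = j then m ^ 2 - 2 * m * A i j else 0 := by
      intro i j
      rw [Matrix.one_apply]
      split_ifs <;> ring
    have htr' : ∑ i, A i i = n * m := htm
    simp only [hentry, Finset.sum_add_distrib, Finset.sum_ite_eq, Finset.mem_univ, if_true,
      Finset.sum_sub_distrib, ← Finset.mul_sum, htr', Finset.sum_const, Finset.card_univ,
      Fintype.card_fin, nsmul_eq_mul]
    ring
  rw [hexp]
  set q := A.det / m ^ n
  have hnn1 : 0 ≤ (n : ℝ) * (n - 1) := mul_nonneg (by linarith) (by linarith)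
  have h5 : (n : ℝ) * (n - 1) * (1 - η') ≤ n * (n - 1) * q := mul_le_mul_of_nonneg_left h hnn1
  have h6 : (n : ℝ) * (n - 1) * η' ≤ 2 * ((n : ℝ) - 1) ^ 2 * η' :=
    mul_le_mul_of_nonneg_right (by nlinarith) hη0.le
  have h7 : (n : ℝ) ^ 2 - n * (n - 1) * q - n ≤ 2 * ((n : ℝ) - 1) ^ 2 * η' := by linarith
  have h8 := mul_le_mul_of_nonneg_right h7 (sq_nonneg m)
  linarith
end
end

section
/- Let n ≥ 3 and β = n/(n−2). The infinite product ξ(x) = ∏_{i=0}^∞ (1 + (β^i/√(2β^i − 1))·x)^{β^{−i}} converges for every x ∈ ℝ⁺ to a continuous function, and satisfies ξ(x) ≤ exp( (n/2)·x/(1+x) )·(1+x)^{n/2} for all x ≥ 0. Moreover ξ(x) ≤ (1+x)ⁿ for every x ≥ 0, and ξ(x) ≤ (4e)^{n/4}·x^{n/2} for every x ≥ 1. -/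
/-!
Write `q = (n-2)/n = 1/β` and `a i = β^i / √(2β^i - 1)`, so that `log ξ(x) = ∑ q^i log (1 + a i x)`.
Since `2t - 1 ≥ t` for `t ≥ 1`, one has `q^i a i ≤ (√q)^i` (`xi_weight_le`), and
`log (1 + y) ≤ y` gives a geometric majorant of the series, locally uniformly in `x`. This yields
convergence and continuity.

For the first estimate, factor `1 + a x = (1 + x) (1 + (a - 1) x/(1+x))` to get
`log ξ(x) ≤ (n/2) log (1+x) + x/(1+x) ∑ q^i (a i - 1)`. Here `∑ q^i = n/2`, and
`∑ q^i a i ≤ 1/(1-√q) = (n/2)(1+√q) ≤ n`, so the last sum is at most `n/2`.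
The other two estimates follow from the first one through the elementary inequalities
`x/(1+x) ≤ log (1+x)` for `x ≥ 0` and
`x/(1+x) + log (1+x) ≤ 1/2 + log 2 + log x` for `x ≥ 1`.
-/

open Real Set

noncomputable section

/-- `ξ(x) = ∏_{i=0}^∞ (1 + (β^i/√(2β^i-1)) x)^{β^{-i}}` with `β = n/(n-2)`. -/
def xi (n : ℕ) (x : ℝ) : ℝ :=
  ∏' i : ℕ, (1 + (((n:ℝ)/((n:ℝ)-2))^i / Real.sqrt (2*((n:ℝ)/((n:ℝ)-2))^i - 1)) * x)
    ^ ((((n:ℝ)-2)/(n:ℝ))^i)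

/-- The coefficient `a i = β^i / √(2β^i - 1)`, with `β = n/(n-2)`. -/
def xiCoeff (n : ℕ) (i : ℕ) : ℝ :=
  ((n:ℝ)/((n:ℝ)-2))^i / Real.sqrt (2*((n:ℝ)/((n:ℝ)-2))^i - 1)

/-- The exponent base `q = (n-2)/n = 1/β`. -/
def xiRatio (n : ℕ) : ℝ := ((n:ℝ)-2)/(n:ℝ)

lemma xiCoeff_nonneg (n : ℕ) (hn : 3 ≤ n) (i : ℕ) : 0 ≤ xiCoeff n i := by
  have h3 : (3:ℝ) ≤ n := by exact_mod_cast hn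
  have : (0:ℝ) < (n:ℝ) - 2 := by linarith
  unfold xiCoeff
  positivity

lemma xiRatio_pos (n : ℕ) (hn : 3 ≤ n) : 0 < xiRatio n := by
  have h3 : (3:ℝ) ≤ n := by exact_mod_cast hn
  exact div_pos (by linarith) (by linarith)

lemma xiRatio_lt_one (n : ℕ) (hn : 3 ≤ n) : xiRatio n < 1 := by
  have h3 : (3:ℝ) ≤ n := by exact_mod_cast hn
  unfold xiRatio
  rw [div_lt_one (by linarith)]
  linarith

lemma sqrt_xiRatio_lt_one (n : ℕ) (hn : 3 ≤ n) : √(xiRatio n) < 1 := by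
  rw [Real.sqrt_lt' one_pos]
  simpa using xiRatio_lt_one n hn

lemma xi_weight_le (n : ℕ) (hn : 3 ≤ n) (i : ℕ) :
    xiRatio n ^ i * xiCoeff n i ≤ √(xiRatio n) ^ i := by
  have hq := xiRatio_pos n hn
  have hβ : (n:ℝ)/((n:ℝ)-2) = (xiRatio n)⁻¹ := by rw [xiRatio, inv_div]
  have hone : 1 ≤ ((xiRatio n)⁻¹) ^ i :=
    one_le_pow₀ ((one_le_inv₀ hq).2 (xiRatio_lt_one n hn).le)
  have hs : 0 < √(xiRatio n) ^ i := by positivity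
  have hsq : ((√(xiRatio n) ^ i)⁻¹) ^ 2 = ((xiRatio n)⁻¹) ^ i := by
    rw [inv_pow, ← pow_mul, mul_comm, pow_mul, Real.sq_sqrt hq.le, inv_pow]
  have hle : (√(xiRatio n) ^ i)⁻¹ ≤ √(2 * ((xiRatio n)⁻¹) ^ i - 1) := by
    apply Real.le_sqrt_of_sq_le
    rw [hsq]
    linarith
  have heq : xiRatio n ^ i * xiCoeff n i = (√(2 * ((xiRatio n)⁻¹) ^ i - 1))⁻¹ := by
    rw [xiCoeff, hβ, ← mul_div_assoc, ← mul_pow, mul_inv_cancel₀ hq.ne', one_pow, one_div]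
  rw [heq]
  exact inv_le_of_inv_le₀ hs hle

/-- The `i`-th term of the series for `log ξ(x)`. -/
def xiLogTerm (n : ℕ) (i : ℕ) (x : ℝ) : ℝ :=
  xiRatio n ^ i * Real.log (1 + xiCoeff n i * x)

lemma xi_factor_eq_exp (n : ℕ) (hn : 3 ≤ n) (i : ℕ) {x : ℝ} (hx : 0 ≤ x) :
    (1 + xiCoeff n i * x) ^ (xiRatio n ^ i) = Real.exp (xiLogTerm n i x) := by
  have := mul_nonneg (xiCoeff_nonneg n hn i) hx
  rw [Real.rpow_def_of_pos (by linarith), xiLogTerm, mul_comm]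

lemma xiLogTerm_nonneg (n : ℕ) (hn : 3 ≤ n) (i : ℕ) {x : ℝ} (hx : 0 ≤ x) :
    0 ≤ xiLogTerm n i x := by
  have := mul_nonneg (xiCoeff_nonneg n hn i) hx
  exact mul_nonneg (pow_nonneg (xiRatio_pos n hn).le i) (Real.log_nonneg (by linarith))

lemma xiLogTerm_le (n : ℕ) (hn : 3 ≤ n) (i : ℕ) {x : ℝ} (hx : 0 ≤ x) :
    xiLogTerm n i x ≤ √(xiRatio n) ^ i * x := by
  have h0 := mul_nonneg (xiCoeff_nonneg n hn i) hx
  have hlog : Real.log (1 + xiCoeff n i * x) ≤ xiCoeff n i * x := by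
    have := Real.log_le_sub_one_of_pos (x := 1 + xiCoeff n i * x) (by linarith)
    linarith
  calc xiLogTerm n i x ≤ xiRatio n ^ i * (xiCoeff n i * x) :=
        mul_le_mul_of_nonneg_left hlog (pow_nonneg (xiRatio_pos n hn).le i)
    _ = xiRatio n ^ i * xiCoeff n i * x := by ring
    _ ≤ √(xiRatio n) ^ i * x := mul_le_mul_of_nonneg_right (xi_weight_le n hn i) hx

lemma summable_sqrt_xiRatio (n : ℕ) (hn : 3 ≤ n) : Summable fun i : ℕ => √(xiRatio n) ^ i :=
  summable_geometric_of_lt_one (Real.sqrt_nonneg _) (sqrt_xiRatio_lt_one n hn)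

lemma summable_xiLogTerm (n : ℕ) (hn : 3 ≤ n) {x : ℝ} (hx : 0 ≤ x) :
    Summable fun i => xiLogTerm n i x :=
  Summable.of_nonneg_of_le (fun i => xiLogTerm_nonneg n hn i hx)
    (fun i => xiLogTerm_le n hn i hx) ((summable_sqrt_xiRatio n hn).mul_right x)

lemma xi_hasProd (n : ℕ) (hn : 3 ≤ n) {x : ℝ} (hx : 0 ≤ x) :
    HasProd (fun i => (1 + xiCoeff n i * x) ^ (xiRatio n ^ i))
      (Real.exp (∑' i, xiLogTerm n i x)) := by
  simp_rw [fun i => xi_factor_eq_exp n hn i hx]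
  exact (summable_xiLogTerm n hn hx).hasSum.rexp

lemma xi_eq_exp (n : ℕ) (hn : 3 ≤ n) {x : ℝ} (hx : 0 ≤ x) :
    xi n x = Real.exp (∑' i, xiLogTerm n i x) :=
  (xi_hasProd n hn hx).tprod_eq

lemma continuousOn_xi (n : ℕ) (hn : 3 ≤ n) : ContinuousOn (xi n) (Ici 0) := by
  have key : ∀ M : ℝ, ContinuousOn (xi n) (Icc 0 M) := by
    intro M
    have hc : ContinuousOn (fun x => ∑' i, xiLogTerm n i x) (Icc 0 M) := by
      refine continuousOn_tsum (u := fun i => √(xiRatio n) ^ i * M) ?_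
        ((summable_sqrt_xiRatio n hn).mul_right M) ?_
      · intro i
        refine continuousOn_const.mul (ContinuousOn.log (by fun_prop) ?_)
        intro x hx
        have := mul_nonneg (xiCoeff_nonneg n hn i) hx.1
        positivity
      · intro i x hx
        rw [Real.norm_of_nonneg (xiLogTerm_nonneg n hn i hx.1)]
        exact (xiLogTerm_le n hn i hx.1).trans
          (mul_le_mul_of_nonneg_left hx.2 (by positivity))
    exact hc.rexp.congr fun x hx => xi_eq_exp n hn hx.1
  intro x hx
  refine (key (x + 1) x ⟨hx, by linarith⟩).mono_of_mem_nhdsWithin ?_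
  rw [← Ici_inter_Iic]
  exact Filter.inter_mem self_mem_nhdsWithin
    (mem_nhdsWithin_of_mem_nhds (Iic_mem_nhds (by linarith)))

lemma hasSum_xiRatio (n : ℕ) (hn : 3 ≤ n) : HasSum (fun i => xiRatio n ^ i) ((n:ℝ)/2) := by
  have h3 : (3:ℝ) ≤ n := by exact_mod_cast hn
  have h := hasSum_geometric_of_lt_one (xiRatio_pos n hn).le (xiRatio_lt_one n hn)
  have he : (1 - xiRatio n)⁻¹ = (n:ℝ)/2 := by
    have : (n:ℝ) ≠ 0 := by linarith
    rw [xiRatio, one_sub_div this]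
    simp
  rwa [he] at h

lemma tsum_sqrt_xiRatio_le (n : ℕ) (hn : 3 ≤ n) : ∑' i, √(xiRatio n) ^ i ≤ (n:ℝ) := by
  have h3 : (3:ℝ) ≤ n := by exact_mod_cast hn
  have hs1 := sqrt_xiRatio_lt_one n hn
  rw [tsum_geometric_of_lt_one (Real.sqrt_nonneg _) hs1]
  have hsq : √(xiRatio n) ^ 2 = xiRatio n := Real.sq_sqrt (xiRatio_pos n hn).le
  have hq : (n:ℝ) * (1 - xiRatio n) = 2 := by
    have : (n:ℝ) ≠ 0 := by linarith
    rw [xiRatio]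
    field_simp
    ring
  rw [inv_le_iff_one_le_mul₀ (by linarith)]
  -- `n (1 - √q) (1 + √q) = 2` and `1 + √q ≤ 2`
  nlinarith [mul_nonneg (mul_nonneg (by linarith : (0:ℝ) ≤ n) (by linarith : 0 ≤ 1 - √(xiRatio n)))
    (by linarith : 0 ≤ 1 - √(xiRatio n))]

lemma tsum_xiLogTerm_le (n : ℕ) (hn : 3 ≤ n) {x : ℝ} (hx : 0 ≤ x) :
    ∑' i, xiLogTerm n i x ≤ (n:ℝ)/2 * (x/(1+x)) + (n:ℝ)/2 * Real.log (1+x) := by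
  have hx1 : 0 < 1 + x := by linarith
  have hy : 0 ≤ x/(1+x) := by positivity
  have hterm : ∀ i, xiLogTerm n i x ≤ √(xiRatio n) ^ i * (x/(1+x))
      + xiRatio n ^ i * (Real.log (1+x) - x/(1+x)) := by
    intro i
    have h0 := mul_nonneg (xiCoeff_nonneg n hn i) hx
    have hpos : 0 < 1 + xiCoeff n i * x := by linarith
    have hlog := Real.log_le_sub_one_of_pos (div_pos hpos hx1)
    rw [Real.log_div hpos.ne' hx1.ne'] at hlog
    have he : (1 + xiCoeff n i * x) / (1+x) - 1 = xiCoeff n i * (x/(1+x)) - x/(1+x) := by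
      field_simp
      ring
    have hlog' : Real.log (1 + xiCoeff n i * x)
        ≤ xiCoeff n i * (x/(1+x)) + (Real.log (1+x) - x/(1+x)) := by linarith
    have h1 := mul_le_mul_of_nonneg_left hlog' (pow_nonneg (xiRatio_pos n hn).le i)
    have h2 := mul_le_mul_of_nonneg_right (xi_weight_le n hn i) hy
    unfold xiLogTerm
    linarith
  have hS := ((summable_sqrt_xiRatio n hn).hasSum.mul_right (x/(1+x))).add
    ((hasSum_xiRatio n hn).mul_right (Real.log (1+x) - x/(1+x)))
  have hle := hasSum_le hterm (summable_xiLogTerm n hn hx).hasSum hS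
  have := mul_le_mul_of_nonneg_right (tsum_sqrt_xiRatio_le n hn) hy
  linarith

lemma div_one_add_le_log {x : ℝ} (hx : 0 ≤ x) : x/(1+x) ≤ Real.log (1+x) := by
  have hx1 : 0 < 1 + x := by linarith
  have h := Real.one_sub_inv_le_log_of_pos hx1
  have he : x/(1+x) = 1 - (1+x)⁻¹ := by
    field_simp
    ring
  rwa [he]

/-- Equality holds at `x = 1`; this is where the constant `4e` comes from. -/
lemma div_one_add_add_log_le {x : ℝ} (hx : 1 ≤ x) :
    x/(1+x) + Real.log (1+x) ≤ 1/2 + Real.log 2 + Real.log x := by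
  have hx0 : 0 < x := by linarith
  have hx1 : 0 < 1 + x := by linarith
  have h := Real.log_le_sub_one_of_pos (x := (1+x)/(2*x)) (by positivity)
  rw [Real.log_div hx1.ne' (by positivity), Real.log_mul two_ne_zero hx0.ne'] at h
  have he : (1+x)/(2*x) - 1 + x/(1+x) ≤ 1/2 := by
    have : 1/2 - ((1+x)/(2*x) - 1 + x/(1+x)) = (x - 1) / (2*x*(1+x)) := by
      field_simp
      ring
    have h2 : 0 ≤ (x - 1) / (2*x*(1+x)) := div_nonneg (by linarith) (by positivity)
    linarith
  linarith

/-- **Lemmas B.1 and B.2** (Appendix B): the infinite product defining `ξ` converges for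
every `x ≥ 0`, `ξ` is continuous on `[0,∞)`, and one has the estimates
`ξ(x) ≤ e^{(n/2) x/(1+x)} (1+x)^{n/2}`, `ξ(x) ≤ (1+x)ⁿ` for all `x ≥ 0`, and
`ξ(x) ≤ (4e)^{n/4} x^{n/2}` for all `x ≥ 1`. -/
theorem xi_estimates (n : ℕ) (hn : 3 ≤ n) :
    (∀ x : ℝ, 0 ≤ x → Multipliable (fun i : ℕ =>
      (1 + (((n:ℝ)/((n:ℝ)-2))^i / Real.sqrt (2*((n:ℝ)/((n:ℝ)-2))^i - 1)) * x)
        ^ ((((n:ℝ)-2)/(n:ℝ))^i))) ∧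
    ContinuousOn (xi n) (Ici 0) ∧
    (∀ x : ℝ, 0 ≤ x →
      xi n x ≤ Real.exp (((n:ℝ)/2) * (x/(1+x))) * (1+x) ^ ((n:ℝ)/2)) ∧
    (∀ x : ℝ, 0 ≤ x → xi n x ≤ (1+x)^n) ∧
    (∀ x : ℝ, 1 ≤ x → xi n x ≤ (4*Real.exp 1) ^ ((n:ℝ)/4) * x ^ ((n:ℝ)/2)) := by
  have hn0 : (0:ℝ) ≤ (n:ℝ)/2 := by positivity
  refine ⟨fun x hx => (xi_hasProd n hn hx).multipliable, continuousOn_xi n hn, ?_, ?_, ?_⟩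
  · intro x hx
    rw [xi_eq_exp n hn hx, Real.rpow_def_of_pos (by linarith), ← Real.exp_add]
    apply Real.exp_le_exp.2
    linarith [tsum_xiLogTerm_le n hn hx]
  · intro x hx
    rw [xi_eq_exp n hn hx, ← Real.rpow_natCast, Real.rpow_def_of_pos (by linarith)]
    apply Real.exp_le_exp.2
    have := mul_le_mul_of_nonneg_left (div_one_add_le_log hx) hn0
    linarith [tsum_xiLogTerm_le n hn hx]
  · intro x hx
    have hx0 : 0 ≤ x := by linarith
    have hlog4 : Real.log (4 * Real.exp 1) = 2 * Real.log 2 + 1 := by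
      rw [Real.log_mul (by norm_num) (Real.exp_pos 1).ne', Real.log_exp,
        show (4:ℝ) = 2 ^ 2 by norm_num, Real.log_pow]
      norm_num
    rw [xi_eq_exp n hn hx0, Real.rpow_def_of_pos (by positivity),
      Real.rpow_def_of_pos (by linarith), ← Real.exp_add, hlog4]
    apply Real.exp_le_exp.2
    have := mul_le_mul_of_nonneg_left (div_one_add_add_log_le hx) hn0
    linarith [tsum_xiLogTerm_le n hn hx0]
end
end
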